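/- arXiv:math/0311041 — 2 statements merged into one kernel-verified Lean document; each statement's English description precedes it below -/
import Mathlib

section
/- If X is a C-maximal set of vertices of a directed graph G, then every class C of C(X) with |C| ≠ 2 is a homogeneous set: either all ordered pairs of distinct vertices of C are edges, or none is. -/
/-- For vertices `u, v ∉ X` of a digraph, `u ≡_X v` iff `u` and `v` have identical
in- and out-adjacencies to every vertex of `X`. -/
def Digraph.EqOn {V : Type*} (E : V → V → Prop) (X : Set V) (u v : V) : Prop :=
  ∀ x ∈ X, (E u x ↔ E v x) ∧ (E x u ↔ E x v)

/-- The `≡_X`-class of a vertex `u ∉ X`. -/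
def Digraph.classOf {V : Type*} (E : V → V → Prop) (X : Set V) (u : V) : Set V :=
  {v | v ∉ X ∧ Digraph.EqOn E X u v}

/-- The partition `C(X)` of the complement of `X` into `≡_X`-classes. -/
def Digraph.classes {V : Type*} (E : V → V → Prop) (X : Set V) : Set (Set V) :=
  {S | ∃ u, u ∉ X ∧ S = Digraph.classOf E X u}

/-- `X` is `C`-maximal if adding a single vertex never increases the number of classes. -/
def Digraph.CMaximal {V : Type*} (E : V → V → Prop) (X : Set V) : Prop :=
  ∀ u ∉ X, (Digraph.classes E (X ∪ {u})).ncard ≤ (Digraph.classes E X).ncard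

/-!
Adding a vertex `a` to `X` can only refine the classes, and it destroys none of them if the class
of `a` has another vertex. So if `X` is `C`-maximal then no class is split, which says that all
vertices of the class of `a` other than `a` are joined to `a` in the same way. Hence, for distinct
`a, b` in a class, replacing one of the two vertices by another vertex of the class does not change
whether `(a, b)` is an edge. As soon as the class has a third vertex, any ordered pair of distinct
vertices can be turned into any other by such moves.
-/

namespace DigraphClasses

open Digraph

variable {V : Type*} {E : V → V → Prop} {X Y C : Set V} {u v w : V}

theorem eqOn_equivalence (E : V → V → Prop) (X : Set V) : Equivalence (EqOn E X) where
  refl _ _ _ := ⟨Iff.rfl, Iff.rfl⟩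
  symm h x hx := ⟨(h x hx).1.symm, (h x hx).2.symm⟩
  trans h k x hx := ⟨(h x hx).1.trans (k x hx).1, (h x hx).2.trans (k x hx).2⟩

theorem eqOn_mono (hXY : X ⊆ Y) (h : EqOn E Y u v) : EqOn E X u v :=
  fun x hx => h x (hXY hx)

theorem eqOn_union : EqOn E (X ∪ Y) u v ↔ EqOn E X u v ∧ EqOn E Y u v :=
  forall₂_or_left

theorem eqOn_singleton : EqOn E {w} u v ↔ (E u w ↔ E v w) ∧ (E w u ↔ E w v) :=
  forall_eq

theorem eqOn_of_mem_classOf (hv : v ∈ classOf E X u) (hw : w ∈ classOf E X u) : EqOn E X v w :=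
  (eqOn_equivalence E X).trans ((eqOn_equivalence E X).symm hv.2) hw.2

theorem mem_classOf_self (hu : u ∉ X) : u ∈ classOf E X u :=
  ⟨hu, (eqOn_equivalence E X).refl u⟩

theorem classOf_mem_classes (hu : u ∉ X) : classOf E X u ∈ classes E X :=
  ⟨u, hu, rfl⟩

theorem classOf_eq_of_eqOn (h : EqOn E X u v) : classOf E X u = classOf E X v := by
  ext w
  exact and_congr_right fun _ =>
    ⟨(eqOn_equivalence E X).trans ((eqOn_equivalence E X).symm h), (eqOn_equivalence E X).trans h⟩

theorem classOf_union : classOf E (X ∪ Y) u = classOf E X u ∩ classOf E Y u := by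
  ext v
  simp only [classOf, eqOn_union, Set.mem_union, not_or, Set.mem_inter_iff, Set.mem_ofPred_eq]
  exact and_and_and_comm

theorem finite_classes_union (hX : (classes E X).Finite) (hY : (classes E Y).Finite) :
    (classes E (X ∪ Y)).Finite := by
  refine (hX.image2 (· ∩ ·) hY).subset ?_
  rintro _ ⟨u, hu, rfl⟩
  rw [classOf_union]
  exact Set.mem_image2_of_mem (classOf_mem_classes fun h => hu (.inl h))
    (classOf_mem_classes fun h => hu (.inr h))

theorem finite_classes_of_finite (hX : X.Finite) : (classes E X).Finite := by
  have := hX.to_subtype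
  let classOfPattern (p : X → Prop × Prop) : Set V :=
    {v | v ∉ X ∧ ∀ x : X, ((p x).1 ↔ E v x) ∧ ((p x).2 ↔ E x v)}
  refine (Set.finite_range classOfPattern).subset ?_
  rintro _ ⟨u, -, rfl⟩
  refine ⟨fun x => (E u x, E x u), ?_⟩
  ext v
  exact and_congr_right fun _ => Subtype.forall

/-- The union of the `≡_X`-classes of the vertices of `S`. For `X ⊆ Y` it sends each `≡_Y`-class
to the `≡_X`-class containing it, which is how the classes of `X` and of `Y` are compared. -/
def saturation (E : V → V → Prop) (X S : Set V) : Set V :=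
  ⋃ s ∈ S, classOf E X s

theorem saturation_classOf (hXY : X ⊆ Y) (hu : u ∉ Y) :
    saturation E X (classOf E Y u) = classOf E X u := by
  refine (Set.iUnion₂_subset fun s hs => ?_).antisymm
    (Set.subset_biUnion_of_mem (u := classOf E X) (mem_classOf_self hu))
  rw [classOf_eq_of_eqOn (eqOn_mono hXY hs.2)]

theorem image_saturation_classes (hXY : X ⊆ Y) (hmeet : ∀ u ∉ X, ∃ v ∉ Y, EqOn E X u v) :
    saturation E X '' classes E Y = classes E X := by
  ext S
  constructor
  · rintro ⟨_, ⟨u, hu, rfl⟩, rfl⟩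
    rw [saturation_classOf hXY hu]
    exact classOf_mem_classes fun h => hu (hXY h)
  · rintro ⟨u, hu, rfl⟩
    obtain ⟨v, hv, huv⟩ := hmeet u hu
    exact ⟨classOf E Y v, classOf_mem_classes hv,
      (saturation_classOf hXY hv).trans (classOf_eq_of_eqOn huv).symm⟩

theorem eqOn_of_ncard_classes_le (hXY : X ⊆ Y) (hfin : (classes E Y).Finite)
    (hmeet : ∀ u ∉ X, ∃ v ∉ Y, EqOn E X u v)
    (hcard : (classes E Y).ncard ≤ (classes E X).ncard)
    (hu : u ∉ Y) (hv : v ∉ Y) (huv : EqOn E X u v) : EqOn E Y u v := by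
  have hinj : Set.InjOn (saturation E X) (classes E Y) := by
    refine Set.injOn_of_ncard_image_eq ((Set.ncard_image_le hfin).antisymm ?_) hfin
    rwa [image_saturation_classes hXY hmeet]
  have hclass : classOf E Y u = classOf E Y v := by
    refine hinj (classOf_mem_classes hu) (classOf_mem_classes hv) ?_
    rw [saturation_classOf hXY hu, saturation_classOf hXY hv, classOf_eq_of_eqOn huv]
  have hmem : v ∈ classOf E Y u := hclass ▸ mem_classOf_self hv
  exact hmem.2

theorem eqOn_singleton_of_cMaximal (hX : CMaximal E X) (hfin : (classes E X).Finite)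
    {a b c : V} (ha : a ∈ classOf E X u) (hb : b ∈ classOf E X u) (hc : c ∈ classOf E X u)
    (hba : b ≠ a) (hca : c ≠ a) : EqOn E {a} b c := by
  have notMem_union {v : V} (hvX : v ∉ X) (hva : v ≠ a) : v ∉ X ∪ {a} :=
    fun h => h.elim hvX hva
  have hmeet : ∀ v ∉ X, ∃ w ∉ X ∪ {a}, EqOn E X v w := by
    intro v hv
    obtain rfl | hva := eq_or_ne v a
    · exact ⟨b, notMem_union hb.1 hba, eqOn_of_mem_classOf ha hb⟩
    · exact ⟨v, notMem_union hv hva, (eqOn_equivalence E X).refl v⟩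
  have hbc : EqOn E (X ∪ {a}) b c :=
    eqOn_of_ncard_classes_le Set.subset_union_left
      (finite_classes_union hfin (finite_classes_of_finite (Set.finite_singleton a))) hmeet
      (hX a ha.1) (notMem_union hb.1 hba) (notMem_union hc.1 hca) (eqOn_of_mem_classOf hb hc)
  exact (eqOn_union.1 hbc).2

theorem exists_mem_ne_ne_of_ncard_ne_two (hC : C.ncard ≠ 2) (hu : u ∈ C) (hv : v ∈ C)
    (huv : u ≠ v) : ∃ w ∈ C, w ≠ u ∧ w ≠ v := by
  by_contra! hall
  have hsub : C ⊆ {u, v} := fun w hw => or_iff_not_imp_left.2 (hall w hw)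
  have hpair : C = {u, v} := hsub.antisymm (Set.pair_subset hu hv)
  exact hC (hpair ▸ Set.ncard_pair huv)

theorem edge_iff_edge_of_eqOn_singleton (hC : C.ncard ≠ 2)
    (h : ∀ a ∈ C, ∀ b ∈ C, ∀ c ∈ C, b ≠ a → c ≠ a → EqOn E {a} b c)
    {p q a b : V} (hp : p ∈ C) (hq : q ∈ C) (ha : a ∈ C) (hb : b ∈ C)
    (hpq : p ≠ q) (hab : a ≠ b) : E p q ↔ E a b := by
  have change_source {x y z : V} (hx : x ∈ C) (hy : y ∈ C) (hz : z ∈ C)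
      (hxz : x ≠ z) (hyz : y ≠ z) : E x z ↔ E y z :=
    (eqOn_singleton.1 (h z hz x hx y hy hxz hyz)).1
  have change_target {x y z : V} (hx : x ∈ C) (hy : y ∈ C) (hz : z ∈ C)
      (hxy : x ≠ y) (hxz : x ≠ z) : E x y ↔ E x z :=
    (eqOn_singleton.1 (h x hx y hy z hz hxy.symm hxz.symm)).2
  obtain hpb | rfl := ne_or_eq p b
  · calc
      E p q ↔ E p b := change_target hp hq hb hpq hpb
      _ ↔ E a b := change_source hp ha hb hpb hab
  obtain haq | rfl := ne_or_eq a q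
  · calc
      E p q ↔ E a q := change_source hp ha hq hpq haq
      _ ↔ E a p := change_target ha hq hp haq hab
  obtain ⟨r, hr, hrp, hra⟩ := exists_mem_ne_ne_of_ncard_ne_two hC hp ha hpq
  calc
    E p a ↔ E p r := change_target hp ha hr hpq hrp.symm
    _ ↔ E a r := change_source hp ha hr hrp.symm hra.symm
    _ ↔ E a p := change_target ha hr hp hra.symm hab

end DigraphClasses

theorem digraph_classOf_homogeneous_of_cMaximal_general {V : Type*} {E : V → V → Prop}
    {X : Set V} (hX : Digraph.CMaximal E X) (hfin : (Digraph.classes E X).Finite) {u : V}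
    (hcard : (Digraph.classOf E X u).ncard ≠ 2) :
    (Digraph.classOf E X u).Pairwise E ∨
      (Digraph.classOf E X u).Pairwise fun a b => ¬ E a b := by
  refine or_iff_not_imp_right.2 fun hnot a ha b hb hab => ?_
  obtain ⟨p, hp, q, hq, hpq, hE⟩ : ∃ p ∈ Digraph.classOf E X u, ∃ q ∈ Digraph.classOf E X u,
      p ≠ q ∧ E p q := by
    simpa only [Set.Pairwise, not_forall, exists_prop, not_not] using hnot
  refine (DigraphClasses.edge_iff_edge_of_eqOn_singleton hcard ?_ hp hq ha hb hpq hab).1 hE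
  intro a ha b hb c hc
  exact DigraphClasses.eqOn_singleton_of_cMaximal hX hfin ha hb hc

/-- If `X` is a `C`-maximal vertex set of a loopless digraph, then every class `C` of
`C(X)` with `|C| ≠ 2` is homogeneous: either all ordered pairs of distinct vertices of
`C` are edges, or none is. -/
theorem digraph_classOf_homogeneous_of_cMaximal {V : Type*} [Fintype V]
    (E : V → V → Prop) (hloopless : ∀ v, ¬ E v v) (X : Set V)
    (hX : Digraph.CMaximal E X) (u : V) (hu : u ∉ X)
    (hcard : (Digraph.classOf E X u).ncard ≠ 2) :
    (∀ a ∈ Digraph.classOf E X u, ∀ b ∈ Digraph.classOf E X u, a ≠ b → E a b) ∨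
      (∀ a ∈ Digraph.classOf E X u, ∀ b ∈ Digraph.classOf E X u, ¬ E a b) :=
  (digraph_classOf_homogeneous_of_cMaximal_general hX (Set.toFinite _) hcard).imp
    (fun hall _ ha _ hb => hall ha hb)
    fun hnone a ha _ hb hab => hnone ha hb (fun h => hloopless a (h ▸ hab)) hab
end

section
/- For a graph G of order n, if its maximum similarity class [v] satisfies σ(G) = |[v]| ≥ n/2 and [v] is an independent set, then [v] is an inclusion-maximal independent set if and only if |[v]| equals the independence number α(G). -/
/-- Vertices `u` and `v` of a graph are *similar* if the transposition `(u v)`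
is an automorphism of the graph. -/
def SimpleGraph.IsSim {V : Type*} [DecidableEq V] (G : SimpleGraph V) (u v : V) : Prop :=
  ∀ x y : V, G.Adj x y ↔ G.Adj (Equiv.swap u v x) (Equiv.swap u v y)

/-!
A vertex outside the similarity class `[v]` is adjacent to all of `[v]` or to none of it. Hence an
independent set meeting `[v]` stays independent when all of `[v]` is added to it, and so lies in
`[v]` if `[v]` is maximal. An independent set disjoint from `[v]` has at most
`n - |[v]| ≤ n/2 ≤ |[v]|` vertices.
-/

/-- A *module* (homogeneous set) of a graph: no vertex outside `M` distinguishes two vertices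
of `M`. It captures the one property of similarity classes that the argument needs. -/
def IsGraphModule {V : Type*} (G : SimpleGraph V) (M : Set V) : Prop :=
  ∀ ⦃x⦄, x ∉ M → ∀ ⦃a⦄, a ∈ M → ∀ ⦃b⦄, b ∈ M → (G.Adj x a ↔ G.Adj x b)

theorem maximal_of_forall_ncard_le {α : Type*} [Finite α] {P : Set α → Prop} {s : Set α}
    (hs : P s) (hcard : ∀ t, P t → t.ncard ≤ s.ncard) : Maximal P s :=
  maximal_iff.mpr ⟨hs, fun t ht hst => Set.eq_of_subset_of_ncard_le hst (hcard t ht)⟩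

theorem ncard_le_of_disjoint_of_card_le_two_mul {α : Type*} [Finite α] {s t : Set α}
    (hst : Disjoint s t) (hhalf : Nat.card α ≤ 2 * t.ncard) : s.ncard ≤ t.ncard := by
  have hunion : s.ncard + t.ncard ≤ Nat.card α :=
    Set.ncard_union_eq hst ▸ Set.ncard_le_card (s ∪ t)
  lia

namespace IsGraphModule

variable {V : Type*} {G : SimpleGraph V} {M S : Set V}

theorem isIndepSet_union (hM : IsGraphModule G M) (hMind : G.IsIndepSet M)
    (hS : G.IsIndepSet S) (hmeet : (S ∩ M).Nonempty) : G.IsIndepSet (S ∪ M) := by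
  obtain ⟨c, hcS, hcM⟩ := hmeet
  have : Std.Symm fun a b => ¬ G.Adj a b := ⟨fun _ _ => mt SimpleGraph.Adj.symm⟩
  refine Set.pairwise_union_of_symm.mpr ⟨hS, hMind, fun s hsS m hm hne => ?_⟩
  by_cases hsM : s ∈ M
  · exact hMind hsM hm hne
  · have not_adj_c : ¬ G.Adj s c := hS hsS hcS (ne_of_mem_of_not_mem hcM hsM).symm
    exact mt (hM hsM hm hcM).mp not_adj_c

theorem subset_of_maximal_isIndepSet (hM : IsGraphModule G M) (hmax : Maximal G.IsIndepSet M)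
    (hS : G.IsIndepSet S) (hmeet : (S ∩ M).Nonempty) : S ⊆ M :=
  Set.subset_union_left.trans <|
    hmax.le_of_ge (hM.isIndepSet_union hmax.prop hS hmeet) Set.subset_union_right

theorem ncard_le_of_maximal_isIndepSet [Finite V] (hM : IsGraphModule G M)
    (hhalf : Nat.card V ≤ 2 * M.ncard) (hmax : Maximal G.IsIndepSet M) (hS : G.IsIndepSet S) :
    S.ncard ≤ M.ncard := by
  rcases S.disjoint_or_nonempty_inter M with hdisj | hmeet
  · exact ncard_le_of_disjoint_of_card_le_two_mul hdisj hhalf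
  · exact Set.ncard_le_ncard (hM.subset_of_maximal_isIndepSet hmax hS hmeet)

theorem maximal_isIndepSet_iff_forall_ncard_le [Finite V] (hM : IsGraphModule G M)
    (hhalf : Nat.card V ≤ 2 * M.ncard) (hMind : G.IsIndepSet M) :
    Maximal G.IsIndepSet M ↔ ∀ S, G.IsIndepSet S → S.ncard ≤ M.ncard :=
  ⟨fun hmax _ hS => hM.ncard_le_of_maximal_isIndepSet hhalf hmax hS,
    maximal_of_forall_ncard_le hMind⟩

end IsGraphModule

section Similarity

variable {V : Type*} [DecidableEq V] {G : SimpleGraph V}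

theorem isSim_refl (G : SimpleGraph V) (v : V) : G.IsSim v v := fun x y => by
  rw [Equiv.swap_self, Equiv.refl_apply, Equiv.refl_apply]

theorem adj_iff_adj_of_isSim {u w x : V} (h : G.IsSim u w) (hxu : x ≠ u) (hxw : x ≠ w) :
    G.Adj x u ↔ G.Adj x w := by
  simpa only [Equiv.swap_apply_of_ne_of_ne hxu hxw, Equiv.swap_apply_left] using h x u

theorem isGraphModule_setOf_isSim (G : SimpleGraph V) (v : V) :
    IsGraphModule G {w | G.IsSim v w} := by
  intro x hx a ha b hb
  have adj_iff_adj_rep : ∀ w, G.IsSim v w → (G.Adj x v ↔ G.Adj x w) := fun w hw =>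
    adj_iff_adj_of_isSim hw (ne_of_mem_of_not_mem (isSim_refl G v) hx).symm
      (ne_of_mem_of_not_mem hw hx).symm
  exact (adj_iff_adj_rep a ha).symm.trans (adj_iff_adj_rep b hb)

end Similarity

/-- Let `[v]` be a largest similarity class of a graph `G` of order `n`, and suppose
`[v]` is independent with `|[v]| ≥ n/2`.  Then `[v]` is an inclusion-maximal
independent set iff `|[v]| = α(G)`, i.e. iff every independent set has at most `|[v]|`
vertices. -/
theorem simClass_maximal_iff_card_eq_indepNumber {V : Type*} [Fintype V] [DecidableEq V]
    (G : SimpleGraph V) (v : V)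
    (hmaxclass : ∀ u : V, ({w | G.IsSim u w}).ncard ≤ ({w | G.IsSim v w}).ncard)
    (hhalf : Fintype.card V ≤ 2 * ({w | G.IsSim v w}).ncard)
    (hind : ({w | G.IsSim v w}).Pairwise fun a b => ¬ G.Adj a b) :
    ((∀ S : Set V, (S.Pairwise fun a b => ¬ G.Adj a b) → {w | G.IsSim v w} ⊆ S →
        S = {w | G.IsSim v w}) ↔
      (∀ S : Set V, (S.Pairwise fun a b => ¬ G.Adj a b) →
        S.ncard ≤ ({w | G.IsSim v w}).ncard)) := by
  have hhalf' : Nat.card V ≤ 2 * ({w | G.IsSim v w}).ncard :=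
    Nat.card_eq_fintype_card.trans_le hhalf
  rw [← (isGraphModule_setOf_isSim G v).maximal_isIndepSet_iff_forall_ncard_le hhalf' hind,
    maximal_iff, and_iff_right hind]
  exact forall₃_congr fun S _ _ => eq_comm
end
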